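/- arXiv:2401.02623 — 2 statements merged into one kernel-verified Lean document; each statement's English description precedes it below -/
import Mathlib

section
/- Define the distorted Fourier basis e(x, ξ) := (2π)^{−1/2} · [ (−ξ² − 3iξ tanh(x) + 3 tanh²(x) − 1) / (−ξ² + 3i|ξ| + 2) ] · e^{ixξ} for x, ξ ∈ ℝ, and for a Schwartz function f : ℝ → ℂ define its distorted Fourier transform 𝓕̃f(ξ) := ∫_ℝ conj(e(x, ξ)) f(x) dx. Then for every Schwartz function f satisfying the orthogonality conditions ∫_ℝ f(x) sech²(x) dx = 0 and ∫_ℝ f(x) sech(x) tanh(x) dx = 0 (i.e., f is orthogonal to the bound states Y and Q′ of H = −∂ₓ² − 6 sech²(x)), one has the Plancherel identity ∫_ℝ |𝓕̃f(ξ)|² dξ = ∫_ℝ |f(x)|² dx. -/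
/-!
The proof uses the supersymmetric factorization of the reflectionless operator `H`. Write
`t = tanh x`, `A₁ = ∂ + t`, `A₂ = ∂ + 2t`, with formal adjoints `A₁* = -∂ + t`, `A₂* = -∂ + 2t`;
all of them act on Schwartz functions because `tanh` has temperate growth. They satisfy
`A₁ A₁* = 1 - ∂²` and `A₂ A₂* = A₁* A₁ + 3` (`ladder_one_comp`, `ladder_two_comp`), hence
`A₁ A₂ A₂* A₁* = (1 - ∂²)(4 - ∂²)`.

The numerator of `e(x, ξ)` is `(∂ - 2t)(∂ - t) e^{ixξ}`, so integrating by parts shows that the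
distorted Fourier transform of `f` is the ordinary Fourier transform of `g = A₁ A₂ f` divided by a
factor of squared modulus `(1 + ξ²)(4 + ξ²)` (`distFT_eq`, `norm_distFT_sq`).

Let `h` be the Schwartz function with `(1 - ∂²)(4 - ∂²) h = g`, obtained by a Fourier multiplier.
Then `w = f - A₂* A₁* h` satisfies `A₁ A₂ w = 0`. Solving this linear equation shows that `w` is a
combination of `sech tanh` and `sech²`; but `w` is also orthogonal to both, so `w = 0` and
`f = A₂* A₁* h` (`exists_preimage`). By the classical Plancherel theorem the left-hand side is
`⟨ĝ, ĥ⟩ = ⟨g, h⟩ = ⟨A₁ A₂ f, h⟩ = ⟨f, A₂* A₁* h⟩ = ‖f‖²`.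
-/

open MeasureTheory Real Complex

noncomputable def sech (x : ℝ) : ℝ := (Real.cosh x)⁻¹

/-- The distorted Fourier basis associated with `H = −∂ₓ² − 6 sech²`. -/
noncomputable def eFun (x ξ : ℝ) : ℂ :=
  ((Real.sqrt (2 * Real.pi) : ℝ) : ℂ)⁻¹ *
    ((-(ξ : ℂ) ^ 2 - 3 * Complex.I * (ξ : ℂ) * ((Real.tanh x : ℝ) : ℂ)
        + 3 * ((Real.tanh x : ℝ) : ℂ) ^ 2 - 1) /
      (-(ξ : ℂ) ^ 2 + 3 * Complex.I * ((|ξ| : ℝ) : ℂ) + 2)) *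
    Complex.exp (Complex.I * (x : ℂ) * (ξ : ℂ))

/-- The distorted Fourier transform of a Schwartz function. -/
noncomputable def distFT (f : ℝ → ℂ) (ξ : ℝ) : ℂ :=
  ∫ x : ℝ, (starRingEnd ℂ) (eFun x ξ) * f x

open scoped FourierTransform SchwartzMap ContDiff ComplexInnerProductSpace

/-! ### The multiplier `tanh` -/

lemma hasDerivAt_tanh (x : ℝ) : HasDerivAt Real.tanh (1 - Real.tanh x ^ 2) x := by
  have h := (Real.hasDerivAt_sinh x).div (Real.hasDerivAt_cosh x) (Real.cosh_pos x).ne'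
  have e : Real.tanh = fun y => Real.sinh y / Real.cosh y := by
    ext y; exact Real.tanh_eq_sinh_div_cosh y
  rw [e]
  refine HasDerivAt.congr_deriv (h) ?_
  have := (Real.cosh_pos x).ne'
  change _ = 1 - (Real.sinh x / Real.cosh x) ^ 2
  field_simp

lemma hasDerivAt_tanh_ofReal (x : ℝ) :
    HasDerivAt (fun y : ℝ => (Real.tanh y : ℂ)) (1 - (Real.tanh x : ℂ) ^ 2) x := by
  simpa using (hasDerivAt_tanh x).ofReal_comp

lemma norm_tanh_le (x : ℝ) : ‖(Real.tanh x : ℂ)‖ ≤ 1 := by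
  rw [Complex.norm_real]
  exact (Real.abs_tanh_lt_one x).le

lemma continuous_tanh_ofReal : Continuous (fun y : ℝ => (Real.tanh y : ℂ)) :=
  continuous_iff_continuousAt.2 fun x => (hasDerivAt_tanh_ofReal x).continuousAt

/-- Since `tanh' = 1 - tanh²`, every derivative of `tanh` is a polynomial in `tanh`. -/
lemma iteratedDeriv_tanh (n : ℕ) :
    ∃ P : Polynomial ℝ, iteratedDeriv n Real.tanh = fun x => P.eval (Real.tanh x) := by
  induction n with
  | zero => exact ⟨Polynomial.X, by ext x; simp⟩
  | succ n ih =>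
    obtain ⟨P, hP⟩ := ih
    refine ⟨P.derivative * (1 - Polynomial.X ^ 2), ?_⟩
    rw [iteratedDeriv_succ, hP]
    ext x
    have h := (P.hasDerivAt (Real.tanh x)).comp x (hasDerivAt_tanh x)
    simpa [Function.comp_def] using h.deriv

lemma hasTemperateGrowth_tanh : Real.tanh.HasTemperateGrowth := by
  constructor
  · have e : Real.tanh = fun y => Real.sinh y / Real.cosh y := by
      ext y; exact Real.tanh_eq_sinh_div_cosh y
    rw [e]
    exact Real.contDiff_sinh.div Real.contDiff_cosh fun x => (Real.cosh_pos x).ne'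
  · intro n
    obtain ⟨P, hP⟩ := iteratedDeriv_tanh n
    obtain ⟨C, hC⟩ := (isCompact_Icc (a := (-1 : ℝ)) (b := 1)).exists_bound_of_continuousOn
      P.continuous.continuousOn
    refine ⟨0, C, fun x => ?_⟩
    rw [norm_iteratedFDeriv_eq_norm_iteratedDeriv, hP]
    simpa using hC _ (abs_le.1 (Real.abs_tanh_lt_one x).le)

lemma hasTemperateGrowth_tanh_ofReal :
    (fun x : ℝ => (Real.tanh x : ℂ)).HasTemperateGrowth :=
  Function.Complex.hasTemperateGrowth_ofReal.comp hasTemperateGrowth_tanh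

/-! ### The first order factors -/

/-- The first order operator `a ∂ₓ + b tanh(x)` on Schwartz space. The factorization uses
`ladder 1 k = ∂ₓ + k tanh` and its formal adjoint `ladder (-1) k = -∂ₓ + k tanh`, `k = 1, 2`. -/
noncomputable def ladder (a b : ℂ) : 𝓢(ℝ, ℂ) →L[ℂ] 𝓢(ℝ, ℂ) :=
  a • SchwartzMap.derivCLM ℂ ℂ + b • SchwartzMap.smulLeftCLM ℂ (fun x : ℝ => (Real.tanh x : ℂ))

lemma ladder_apply (a b : ℂ) (u : 𝓢(ℝ, ℂ)) (x : ℝ) :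
    ladder a b u x = a * deriv u x + b * (Real.tanh x * u x) := by
  have h := SchwartzMap.smulLeftCLM_apply_apply hasTemperateGrowth_tanh_ofReal u x
  simp only [smul_eq_mul] at h
  rw [← h]
  rfl

lemma hasDerivAt_deriv (u : 𝓢(ℝ, ℂ)) (x : ℝ) :
    HasDerivAt (deriv u) (deriv (deriv u) x) x :=
  (SchwartzMap.derivCLM ℂ ℂ u).hasDerivAt x

lemma deriv_ladder (a b : ℂ) (u : 𝓢(ℝ, ℂ)) (x : ℝ) :
    deriv (ladder a b u) x = a * deriv (deriv u) x
      + b * ((1 - (Real.tanh x : ℂ) ^ 2) * u x + Real.tanh x * deriv u x) := by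
  have e : (ladder a b u : ℝ → ℂ) = fun x => a * deriv u x + b * (Real.tanh x * u x) := by
    ext x; exact ladder_apply a b u x
  rw [e]
  exact (((hasDerivAt_deriv u x).const_mul a).add
    (((hasDerivAt_tanh_ofReal x).mul (u.hasDerivAt x)).const_mul b)).deriv

lemma ladder_one_comp (u : 𝓢(ℝ, ℂ)) (x : ℝ) :
    ladder 1 1 (ladder (-1) 1 u) x = u x - deriv (deriv u) x := by
  rw [ladder_apply, deriv_ladder, ladder_apply]
  ring

/-- The intertwining relation `(∂ + 2t)(-∂ + 2t) = (-∂ + t)(∂ + t) + 3`, `t = tanh`. -/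
lemma ladder_two_comp (u : 𝓢(ℝ, ℂ)) :
    ladder 1 2 (ladder (-1) 2 u) = ladder (-1) 1 (ladder 1 1 u) + (3 : ℂ) • u := by
  ext x
  simp only [add_apply, smul_apply, smul_eq_mul]
  rw [ladder_apply, deriv_ladder, ladder_apply, ladder_apply, deriv_ladder, ladder_apply]
  ring

lemma integrable_bdd_mul {φ : ℝ → ℂ} (hc : Continuous φ) {C : ℝ} (hC : ∀ x, ‖φ x‖ ≤ C)
    (u : 𝓢(ℝ, ℂ)) : Integrable (fun x => φ x * u x) :=
  u.integrable.bdd_mul hc.aestronglyMeasurable (Filter.Eventually.of_forall hC)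

/-- Integration by parts against a bounded function with bounded continuous derivative. -/
lemma integral_mul_ladder (a b : ℂ) {φ φ' : ℝ → ℂ} (hd : ∀ x, HasDerivAt φ (φ' x) x)
    (hc' : Continuous φ') {C C' : ℝ} (hC : ∀ x, ‖φ x‖ ≤ C) (hC' : ∀ x, ‖φ' x‖ ≤ C')
    (u : 𝓢(ℝ, ℂ)) :
    ∫ x, φ x * ladder a b u x = ∫ x, (-a * φ' x + b * (Real.tanh x * φ x)) * u x := by
  have hc : Continuous φ := continuous_iff_continuousAt.2 fun x => (hd x).continuousAt
  have i1 : Integrable (fun x => φ x * deriv u x) :=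
    integrable_bdd_mul hc hC (SchwartzMap.derivCLM ℂ ℂ u)
  have i2 : Integrable (fun x => φ' x * u x) := integrable_bdd_mul hc' hC' u
  have i3 : Integrable (fun x => φ x * u x) := integrable_bdd_mul hc hC u
  have i4 : Integrable (fun x => Real.tanh x * (φ x * u x)) :=
    i3.bdd_mul continuous_tanh_ofReal.aestronglyMeasurable
      (Filter.Eventually.of_forall norm_tanh_le)
  have key : ∫ x, φ x * deriv u x = -∫ x, φ' x * u x :=
    integral_mul_deriv_eq_deriv_mul_of_integrable (fun x _ => hd x)
      (fun x _ => u.hasDerivAt x) i1 i2 i3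
  calc ∫ x, φ x * ladder a b u x
      = ∫ x, (a * (φ x * deriv u x) + b * (Real.tanh x * (φ x * u x))) := by
        congr 1; ext x; rw [ladder_apply]; ring
    _ = a * (∫ x, φ x * deriv u x) + b * ∫ x, Real.tanh x * (φ x * u x) := by
        rw [integral_add (i1.const_mul a) (i4.const_mul b), integral_const_mul,
          integral_const_mul]
    _ = -a * (∫ x, φ' x * u x) + b * ∫ x, Real.tanh x * (φ x * u x) := by
        rw [key]; ring
    _ = ∫ x, (-a * (φ' x * u x) + b * (Real.tanh x * (φ x * u x))) := by
        rw [integral_add (i2.const_mul _) (i4.const_mul b), integral_const_mul,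
          integral_const_mul]
    _ = _ := by congr 1; ext x; ring

/-! ### Bound states -/

lemma hasDerivAt_sech (x : ℝ) :
    HasDerivAt (fun y : ℝ => (sech y : ℂ)) (-(Real.tanh x * sech x : ℂ)) x := by
  have h := ((Real.hasDerivAt_cosh x).inv (Real.cosh_pos x).ne').ofReal_comp
  refine HasDerivAt.congr_deriv (h) ?_
  rw [← Complex.ofReal_mul, ← Complex.ofReal_neg, Real.tanh_eq_sinh_div_cosh]
  congr 1
  have := (Real.cosh_pos x).ne'
  simp only [sech]
  field_simp

lemma continuous_sech : Continuous (fun y : ℝ => (sech y : ℂ)) :=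
  continuous_iff_continuousAt.2 fun x => (hasDerivAt_sech x).continuousAt

lemma norm_sech_le (x : ℝ) : ‖(sech x : ℂ)‖ ≤ 1 := by
  rw [Complex.norm_real, sech, norm_inv]
  exact inv_le_one_of_one_le₀ (by simp [abs_of_pos (Real.cosh_pos x)])

/-- The range of `-∂ + 2t` is orthogonal to `sech²`. -/
lemma integral_sech_sq_mul_ladder (u : 𝓢(ℝ, ℂ)) :
    ∫ x, (sech x : ℂ) ^ 2 * ladder (-1) 2 u x = 0 := by
  have hb : ∀ x : ℝ, ‖(sech x : ℂ) ^ 2‖ ≤ 1 := fun x => by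
    rw [norm_pow]; exact pow_le_one₀ (norm_nonneg _) (norm_sech_le x)
  rw [integral_mul_ladder (-1) 2 (φ' := fun x => -2 * (Real.tanh x * (sech x : ℂ) ^ 2))
    (C := 1) (C' := 2) (fun x => ?_) ?_ hb (fun x => ?_)]
  · rw [← integral_zero ℝ ℂ]
    congr 1; ext x; ring
  · have := continuous_sech; have := continuous_tanh_ofReal
    fun_prop
  · refine HasDerivAt.congr_deriv ((hasDerivAt_sech x).pow 2) ?_
    norm_num; ring
  · rw [norm_mul, norm_mul]
    have := mul_le_one₀ (norm_tanh_le x) (norm_nonneg _) (hb x)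
    norm_num at this ⊢
    linarith

/-- The range of `(-∂ + 2t)(-∂ + t)` is orthogonal to `sech · tanh`. -/
lemma integral_sech_tanh_mul_ladder (u : 𝓢(ℝ, ℂ)) :
    ∫ x, ((sech x : ℂ) * Real.tanh x) * ladder (-1) 2 (ladder (-1) 1 u) x = 0 := by
  have cs := continuous_sech
  have ct := continuous_tanh_ofReal
  have hb : ∀ x : ℝ, ‖(sech x : ℂ) * Real.tanh x‖ ≤ 1 := fun x => by
    rw [norm_mul]; exact mul_le_one₀ (norm_sech_le x) (norm_nonneg _) (norm_tanh_le x)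
  have hb' : ∀ x : ℝ, ‖-(Real.tanh x * sech x : ℂ)‖ ≤ 1 := fun x => by
    rw [norm_neg, mul_comm]; exact hb x
  rw [integral_mul_ladder (-1) 2
    (φ' := fun x => (sech x : ℂ) - 2 * (Real.tanh x * (sech x * Real.tanh x)))
    (C := 1) (C' := 3) (fun x => ?_) ?_ hb (fun x => ?_)]
  · have e : ∀ x : ℝ, (-(-1 : ℂ) * ((sech x : ℂ) - 2 * (Real.tanh x * (sech x * Real.tanh x)))
        + 2 * (Real.tanh x * ((sech x : ℂ) * Real.tanh x))) = sech x := fun x => by ring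
    simp only [e]
    rw [integral_mul_ladder (-1) 1 hasDerivAt_sech (by fun_prop) norm_sech_le hb']
    rw [← integral_zero ℝ ℂ]
    congr 1; ext x; ring
  · fun_prop
  · refine HasDerivAt.congr_deriv ((hasDerivAt_sech x).mul (hasDerivAt_tanh_ofReal x)) ?_
    ring
  · refine (norm_sub_le _ _).trans ?_
    rw [norm_mul, norm_mul (Real.tanh x : ℂ)]
    have := mul_le_one₀ (norm_tanh_le x) (norm_nonneg _) (hb x)
    have := norm_sech_le x
    norm_num at *
    linarith

/-- Formal adjointness in `L²` of `∂ + b t` and `-∂ + b t` for real `b`. -/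
lemma integral_conj_mul_ladder (b : ℝ) (f u : 𝓢(ℝ, ℂ)) :
    ∫ x, (starRingEnd ℂ) (f x) * ladder (-1) b u x
      = ∫ x, (starRingEnd ℂ) (ladder 1 b f x) * u x := by
  rw [integral_mul_ladder (-1) b (φ := fun x => (starRingEnd ℂ) (f x))
    (φ' := fun x => (starRingEnd ℂ) (deriv f x))
    (C := SchwartzMap.seminorm ℂ 0 0 f)
    (C' := SchwartzMap.seminorm ℂ 0 0 (SchwartzMap.derivCLM ℂ ℂ f))
    (fun x => (f.hasDerivAt x).star) ?_ (fun x => ?_) (fun x => ?_)]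
  · congr 1; ext x
    simp only [ladder_apply, map_add, map_mul, map_one, Complex.conj_ofReal]
    ring
  · exact Complex.continuous_conj.comp (SchwartzMap.derivCLM ℂ ℂ f).continuous
  · rw [RCLike.norm_conj]; exact f.norm_le_seminorm ℂ x
  · rw [RCLike.norm_conj]; exact (SchwartzMap.derivCLM ℂ ℂ f).norm_le_seminorm ℂ x

/-- The kernel of `(∂ + t)(∂ + 2t)` lies in the span of the bound states `sech · tanh`, `sech²`. -/
lemma exists_eq_bound_states (w : 𝓢(ℝ, ℂ)) (hw : ladder 1 1 (ladder 1 2 w) = 0) :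
    ∃ c d : ℂ, ∀ x, w x = c * (sech x * Real.tanh x) + d * (sech x : ℂ) ^ 2 := by
  set v := ladder 1 2 w with hv
  have hch : ∀ x : ℝ, (Real.cosh x : ℂ) ≠ 0 := fun x => by
    exact_mod_cast (Real.cosh_pos x).ne'
  have dch : ∀ x : ℝ, HasDerivAt (fun y : ℝ => (Real.cosh y : ℂ)) (Real.sinh x : ℂ) x :=
    fun x => (Real.hasDerivAt_cosh x).ofReal_comp
  have dsh : ∀ x : ℝ, HasDerivAt (fun y : ℝ => (Real.sinh y : ℂ)) (Real.cosh x : ℂ) x :=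
    fun x => (Real.hasDerivAt_sinh x).ofReal_comp
  have htc : ∀ x : ℝ, (Real.tanh x : ℂ) = Real.sinh x / Real.cosh x := fun x => by
    rw [Real.tanh_eq_sinh_div_cosh, Complex.ofReal_div]
  have hsc : ∀ x : ℝ, (sech x : ℂ) = (Real.cosh x : ℂ)⁻¹ := fun x => by
    rw [sech, Complex.ofReal_inv]
  -- `cosh · v` is constant because `v' = -tanh · v`
  have h1 : ∀ x, HasDerivAt (fun y : ℝ => (Real.cosh y : ℂ) * v y) 0 x := fun x => by
    refine HasDerivAt.congr_deriv ((dch x).mul (v.hasDerivAt x)) ?_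
    have h := congrArg (fun g : 𝓢(ℝ, ℂ) => g x) hw
    simp only [ladder_apply, zero_apply, htc] at h
    have := hch x
    field_simp at h
    linear_combination h
  have c1 : ∀ x, (Real.cosh x : ℂ) * v x = v 0 := fun x => by
    simpa using is_const_of_deriv_eq_zero (fun x => (h1 x).differentiableAt)
      (fun x => (h1 x).deriv) x 0
  -- `cosh² · w - v(0) sinh` is constant because `w' + 2 tanh · w = v(0) / cosh`
  have h2 : ∀ x, HasDerivAt
      (fun y : ℝ => (Real.cosh y : ℂ) ^ 2 * w y - v 0 * Real.sinh y) 0 x := fun x => by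
    refine HasDerivAt.congr_deriv
      ((((dch x).pow 2).mul (w.hasDerivAt x)).sub ((dsh x).const_mul (v 0))) ?_
    have h := c1 x
    have hvx : v x = 1 * deriv w x + 2 * (Real.tanh x * w x) := ladder_apply 1 2 w x
    rw [hvx, htc] at h
    have := hch x
    field_simp at h
    norm_num
    push_cast at h
    linear_combination (Complex.cosh x) * h
  have c2 : ∀ x, (Real.cosh x : ℂ) ^ 2 * w x - v 0 * Real.sinh x = w 0 := fun x => by
    simpa using is_const_of_deriv_eq_zero (fun x => (h2 x).differentiableAt)
      (fun x => (h2 x).deriv) x 0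
  refine ⟨v 0, w 0, fun x => ?_⟩
  rw [hsc, htc, ← c2 x]
  have := hch x
  field_simp
  ring

/-! ### Inverting the constant coefficient operator -/

lemma fourier_deriv_apply (u : 𝓢(ℝ, ℂ)) (η : ℝ) :
    𝓕 (SchwartzMap.derivCLM ℂ ℂ u) η = (2 * π * I * η) * 𝓕 u η := by
  have h := Real.fourier_deriv u.integrable u.differentiable
    (SchwartzMap.derivCLM ℂ ℂ u).integrable
  exact congrFun h η

/-- `(∂ + t)(-∂ + t) = 1 - ∂²` is the Fourier multiplier with symbol `1 + (2πη)²`. -/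
lemma fourier_ladder_one_comp (u : 𝓢(ℝ, ℂ)) (η : ℝ) :
    𝓕 (ladder 1 1 (ladder (-1) 1 u)) η = (1 + (2 * π * η) ^ 2) * 𝓕 u η := by
  have e : ladder 1 1 (ladder (-1) 1 u)
      = u - SchwartzMap.derivCLM ℂ ℂ (SchwartzMap.derivCLM ℂ ℂ u) := by
    ext x; exact ladder_one_comp u x
  have e2 : 𝓕 (u - SchwartzMap.derivCLM ℂ ℂ (SchwartzMap.derivCLM ℂ ℂ u))
      = 𝓕 u - 𝓕 (SchwartzMap.derivCLM ℂ ℂ (SchwartzMap.derivCLM ℂ ℂ u)) :=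
    (SchwartzMap.fourierTransformCLM ℂ).map_sub _ _
  rw [e, e2, sub_apply, fourier_deriv_apply, fourier_deriv_apply]
  linear_combination (-4 * π ^ 2 * η ^ 2 * 𝓕 u η) * I_sq

/-- The symbol `1 / ((1 + (2πη)²)(4 + (2πη)²))` of the inverse of `(1 - ∂²)(4 - ∂²)`. -/
noncomputable def resolventSymbol (η : ℝ) : ℝ :=
  ((1 + (2 * π * η) ^ 2) * (4 + (2 * π * η) ^ 2))⁻¹

lemma resolventSymbol_mul (η : ℝ) :
    (1 + (2 * π * η) ^ 2 : ℂ) * (4 + (2 * π * η) ^ 2) * resolventSymbol η = 1 := by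
  have : (1 + (2 * π * η) ^ 2) * (4 + (2 * π * η) ^ 2) * resolventSymbol η = 1 :=
    mul_inv_cancel₀ (by positivity)
  exact_mod_cast this

lemma hasTemperateGrowth_resolventSymbol :
    (fun η : ℝ => (resolventSymbol η : ℂ)).HasTemperateGrowth := by
  refine Function.Complex.hasTemperateGrowth_ofReal.comp ?_
  have lin : ∀ a : ℝ, (fun η : ℝ => a * η).HasTemperateGrowth := fun a =>
    (Function.HasTemperateGrowth.const a).mul Function.HasTemperateGrowth.id'
  have h1 := (Function.hasTemperateGrowth_one_add_norm_sq_rpow ℝ (-1)).comp (lin (2 * π))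
  have h2 := (Function.hasTemperateGrowth_one_add_norm_sq_rpow ℝ (-1)).comp (lin π)
  have h3 := (Function.HasTemperateGrowth.const (4⁻¹ : ℝ)).mul (h1.mul h2)
  suffices e : resolventSymbol = _ from e ▸ h3
  ext η
  simp only [Pi.mul_apply, Function.comp_apply, Real.norm_eq_abs, sq_abs]
  rw [Real.rpow_neg_one, Real.rpow_neg_one, resolventSymbol, ← mul_inv, ← mul_inv]
  congr 1
  ring

/-- On the orthogonal complement of the bound states, `f = (-∂ + 2t)(-∂ + t) h` where `h` is the
preimage of `(∂ + t)(∂ + 2t) f` under the constant coefficient operator `(1 - ∂²)(4 - ∂²)`. -/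
lemma exists_preimage (f : 𝓢(ℝ, ℂ))
    (hY : (∫ x : ℝ, f x * (((sech x) ^ 2 : ℝ) : ℂ)) = 0)
    (hQ' : (∫ x : ℝ, f x * ((sech x * Real.tanh x : ℝ) : ℂ)) = 0) :
    ∃ h : 𝓢(ℝ, ℂ), f = ladder (-1) 2 (ladder (-1) 1 h) ∧
      ∀ η, 𝓕 h η = resolventSymbol η * 𝓕 (ladder 1 1 (ladder 1 2 f)) η := by
  set g := ladder 1 1 (ladder 1 2 f) with hg
  set h : 𝓢(ℝ, ℂ) :=
    𝓕⁻ (SchwartzMap.smulLeftCLM ℂ (fun η : ℝ => (resolventSymbol η : ℂ)) (𝓕 g)) with hh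
  have hF : ∀ η, 𝓕 h η = resolventSymbol η * 𝓕 g η := fun η => by
    rw [hh, FourierTransform.fourier_fourierInv_eq,
      SchwartzMap.smulLeftCLM_apply_apply hasTemperateGrowth_resolventSymbol, smul_eq_mul]
  refine ⟨h, ?_, hF⟩
  set p := ladder (-1) 2 (ladder (-1) 1 h) with hp
  -- `(∂ + t)(∂ + 2t)` maps `p` to `(1 - ∂²)(4 - ∂²) h = g`
  have hpg : ladder 1 1 (ladder 1 2 p) = g := by
    have e : ladder 1 1 (ladder 1 2 p)
        = ladder 1 1 (ladder (-1) 1 (ladder 1 1 (ladder (-1) 1 h)))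
          + (3 : ℂ) • ladder 1 1 (ladder (-1) 1 h) := by
      rw [hp, ladder_two_comp, map_add, map_smul]
    have e2 : 𝓕 (ladder 1 1 (ladder 1 2 p)) = 𝓕 g := by
      ext η
      have e3 : ∀ u v : 𝓢(ℝ, ℂ), 𝓕 (u + (3 : ℂ) • v) = 𝓕 u + (3 : ℂ) • 𝓕 v := fun u v => by
        simp
      rw [e, e3, add_apply, smul_apply, smul_eq_mul, fourier_ladder_one_comp,
        fourier_ladder_one_comp, hF]
      linear_combination (𝓕 g η) * resolventSymbol_mul η
    have e4 := congrArg (fun u : 𝓢(ℝ, ℂ) => (𝓕⁻ u : 𝓢(ℝ, ℂ))) e2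
    simpa only [FourierTransform.fourierInv_fourier_eq] using e4
  set w := f - p with hwdef
  have hw0 : ladder 1 1 (ladder 1 2 w) = 0 := by
    rw [hwdef, map_sub, map_sub, hpg, ← hg, sub_self]
  obtain ⟨c, d, hcd⟩ := exists_eq_bound_states w hw0
  have cs := continuous_sech
  have ct := continuous_tanh_ofReal
  have hb1 : ∀ x : ℝ, ‖(sech x : ℂ) ^ 2‖ ≤ 1 := fun x => by
    rw [norm_pow]; exact pow_le_one₀ (norm_nonneg _) (norm_sech_le x)
  have hb2 : ∀ x : ℝ, ‖(sech x : ℂ) * Real.tanh x‖ ≤ 1 := fun x => by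
    rw [norm_mul]; exact mul_le_one₀ (norm_sech_le x) (norm_nonneg _) (norm_tanh_le x)
  have o1 : ∫ x, (sech x : ℂ) ^ 2 * w x = 0 := by
    simp only [hwdef, sub_apply, mul_sub]
    rw [integral_sub (integrable_bdd_mul (by fun_prop) hb1 f)
      (integrable_bdd_mul (by fun_prop) hb1 p), integral_sech_sq_mul_ladder, sub_zero, ← hY]
    congr 1; ext x; push_cast; ring
  have o2 : ∫ x, ((sech x : ℂ) * Real.tanh x) * w x = 0 := by
    simp only [hwdef, sub_apply, mul_sub]
    rw [integral_sub (integrable_bdd_mul (by fun_prop) hb2 f)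
      (integrable_bdd_mul (by fun_prop) hb2 p), integral_sech_tanh_mul_ladder, sub_zero, ← hQ']
    congr 1; ext x; push_cast; ring
  -- `w` lies in the span of the bound states and is orthogonal to it
  have o3 : ∫ x, (starRingEnd ℂ) (w x) * w x = 0 := by
    have e : ∀ x, (starRingEnd ℂ) (w x) * w x
        = (starRingEnd ℂ) c * (((sech x : ℂ) * Real.tanh x) * w x)
          + (starRingEnd ℂ) d * ((sech x : ℂ) ^ 2 * w x) := fun x => by
      conv_lhs => rw [hcd x]
      simp only [map_add, map_mul, map_pow, Complex.conj_ofReal]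
      rw [← hcd x]
      ring
    simp only [e]
    rw [integral_add ((integrable_bdd_mul (by fun_prop) hb2 w).const_mul _)
      ((integrable_bdd_mul (by fun_prop) hb1 w).const_mul _), integral_const_mul,
      integral_const_mul, o1, o2]
    simp
  have o4 : ∫ x, ‖w x‖ ^ 2 = 0 := by
    apply Complex.ofReal_injective
    rw [← integral_complex_ofReal, Complex.ofReal_zero, ← o3]
    congr 1; ext x
    rw [mul_comm, Complex.mul_conj, Complex.normSq_eq_norm_sq]
  have hint : Integrable (fun x => ‖w x‖ ^ 2) := by
    have := (w.memLp 2 (volume : Measure ℝ)).integrable_norm_pow (by norm_num)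
    simpa using this
  have hz : (fun x => ‖w x‖ ^ 2) = 0 := by
    have h0 := (integral_eq_zero_iff_of_nonneg (fun x => by positivity) hint).1 o4
    exact (Continuous.ae_eq_iff_eq volume (w.continuous.norm.pow 2) continuous_const).1 h0
  have hw : w = 0 := by
    ext x
    simpa using congrFun hz x
  exact sub_eq_zero.1 hw

/-! ### The distorted Fourier transform as a Fourier transform -/

/-- Since `e(·, ξ)` is proportional to `(∂ - 2t)(∂ - t) e^{ixξ}`, the distorted Fourier transform
of `f` is, up to a factor depending on `ξ`, the Fourier transform of `(∂ + t)(∂ + 2t) f`. -/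
lemma distFT_eq (f : 𝓢(ℝ, ℂ)) (ξ : ℝ) :
    distFT f ξ = ((Real.sqrt (2 * π) : ℝ) : ℂ)⁻¹ *
      ((starRingEnd ℂ) (-(ξ : ℂ) ^ 2 + 3 * I * ((|ξ| : ℝ) : ℂ) + 2))⁻¹ *
        𝓕 (ladder 1 1 (ladder 1 2 f)) (ξ / (2 * π)) := by
  have ct := continuous_tanh_ofReal
  set E : ℝ → ℂ := fun x => Complex.exp (-(I * x * ξ)) with hE
  have dE : ∀ x, HasDerivAt E (-(I * ξ) * E x) x := fun x => by
    have h1 : HasDerivAt (fun y : ℝ => -(I * (y : ℂ) * ξ)) (-(I * ξ)) x := by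
      refine HasDerivAt.congr_deriv
        (((Complex.ofRealCLM.hasDerivAt (x := x)).const_mul I).mul_const (ξ : ℂ)).neg ?_
      simp
    refine HasDerivAt.congr_deriv h1.cexp ?_
    ring
  have cE : Continuous E := continuous_iff_continuousAt.2 fun x => (dE x).continuousAt
  have bE : ∀ x, ‖E x‖ ≤ 1 := fun x => by
    rw [hE, Complex.norm_exp]; simp
  have bE1 : ∀ x, ‖-(I * ξ) * E x‖ ≤ |ξ| := fun x => by
    rw [norm_mul]; simpa using mul_le_mul_of_nonneg_left (bE x) (abs_nonneg ξ)
  have bT : ∀ x : ℝ, ‖I * ξ + (Real.tanh x : ℂ)‖ ≤ |ξ| + 1 := fun x =>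
    (norm_add_le _ _).trans (add_le_add (by simp) (norm_tanh_le x))
  have bφ : ∀ x : ℝ, ‖(I * ξ + (Real.tanh x : ℂ)) * E x‖ ≤ (|ξ| + 1) * 1 := fun x => by
    rw [norm_mul]
    exact mul_le_mul (bT x) (bE x) (norm_nonneg _) (by positivity)
  have bS : ∀ x : ℝ, ‖1 - (Real.tanh x : ℂ) ^ 2‖ ≤ 2 := fun x => by
    refine (norm_sub_le _ _).trans ?_
    have := pow_le_one₀ (n := 2) (norm_nonneg _) (norm_tanh_le x)
    rw [norm_pow, norm_one]; linarith
  have key : 𝓕 (ladder 1 1 (ladder 1 2 f)) (ξ / (2 * π)) =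
      ∫ x, ((-(ξ : ℂ) ^ 2 + 3 * I * ξ * Real.tanh x + 3 * (Real.tanh x : ℂ) ^ 2 - 1) * E x)
        * f x := by
    have e0 : 𝓕 (ladder 1 1 (ladder 1 2 f)) (ξ / (2 * π))
        = ∫ x, E x * ladder 1 1 (ladder 1 2 f) x := by
      rw [SchwartzMap.fourier_coe, Real.fourier_real_eq_integral_exp_smul]
      congr 1; ext x
      rw [smul_eq_mul, hE]
      congr 2
      have : (π : ℂ) ≠ 0 := by exact_mod_cast Real.pi_ne_zero
      push_cast
      field_simp
    rw [e0, integral_mul_ladder 1 1 dE (by fun_prop) bE bE1]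
    have e1 : ∀ x : ℝ, (-1 * (-(I * ξ) * E x) + 1 * (Real.tanh x * E x))
        = (I * ξ + (Real.tanh x : ℂ)) * E x := fun x => by ring
    simp only [e1]
    rw [integral_mul_ladder 1 2
      (φ := fun x => (I * ξ + (Real.tanh x : ℂ)) * E x)
      (φ' := fun x => (1 - (Real.tanh x : ℂ) ^ 2) * E x
        + (I * ξ + (Real.tanh x : ℂ)) * (-(I * ξ) * E x))
      (C := (|ξ| + 1) * 1) (C' := 2 * 1 + (|ξ| + 1) * |ξ|)
      (fun x => ((hasDerivAt_tanh_ofReal x).const_add (I * ξ)).mul (dE x)) (by fun_prop) bφ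
      (fun x => ?_)]
    · congr 1; ext x
      linear_combination ((ξ : ℂ) ^ 2 * E x * f x) * I_sq
    · refine (norm_add_le _ _).trans (add_le_add ?_ ?_)
      · rw [norm_mul]; exact mul_le_mul (bS x) (bE x) (norm_nonneg _) (by positivity)
      · rw [norm_mul]; exact mul_le_mul (bT x) (bE1 x) (norm_nonneg _) (by positivity)
  rw [key, distFT, ← integral_const_mul]
  congr 1; ext x
  have e : (starRingEnd ℂ) (Complex.exp (I * x * ξ)) = E x := by
    rw [hE, ← Complex.exp_conj]; simp
  simp only [eFun, map_mul, map_div₀, map_inv₀, e]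
  simp only [map_add, map_sub, map_neg, map_mul, map_pow, Complex.conj_ofReal, Complex.conj_I,
    map_one, map_ofNat]
  ring

lemma norm_distFT_sq (f : 𝓢(ℝ, ℂ)) (ξ : ℝ) :
    ‖distFT f ξ‖ ^ 2 = (2 * π)⁻¹ * (resolventSymbol (ξ / (2 * π)) *
      ‖𝓕 (ladder 1 1 (ladder 1 2 f)) (ξ / (2 * π))‖ ^ 2) := by
  have hD : ‖-(ξ : ℂ) ^ 2 + 3 * I * ((|ξ| : ℝ) : ℂ) + 2‖ ^ 2 = (1 + ξ ^ 2) * (4 + ξ ^ 2) := by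
    have e : -(ξ : ℂ) ^ 2 + 3 * I * ((|ξ| : ℝ) : ℂ) + 2
        = ((2 - ξ ^ 2 : ℝ) : ℂ) + ((3 * |ξ| : ℝ) : ℂ) * I := by push_cast; ring
    rw [e, ← Complex.normSq_eq_norm_sq, Complex.normSq_add_mul_I, mul_pow, sq_abs]
    ring
  have hπ : 2 * π * (ξ / (2 * π)) = ξ := by
    field_simp
  rw [distFT_eq, norm_mul, norm_mul, norm_inv, norm_inv, RCLike.norm_conj, mul_pow, mul_pow,
    inv_pow, inv_pow, hD, Complex.norm_real, Real.norm_eq_abs, sq_abs,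
    Real.sq_sqrt (by positivity), resolventSymbol, hπ]
  ring

theorem distorted_Plancherel
    (f : SchwartzMap ℝ ℂ)
    -- f is orthogonal to the bound state Y (∝ sech²)
    (hY : (∫ x : ℝ, f x * (((sech x) ^ 2 : ℝ) : ℂ)) = 0)
    -- f is orthogonal to the bound state Q′ (∝ sech · tanh)
    (hQ' : (∫ x : ℝ, f x * ((sech x * Real.tanh x : ℝ) : ℂ)) = 0) :
    (∫ ξ : ℝ, ‖distFT (⇑f) ξ‖ ^ 2) = ∫ x : ℝ, ‖f x‖ ^ 2 := by
  obtain ⟨h, hf, hF⟩ := exists_preimage f hY hQ'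
  set g := ladder 1 1 (ladder 1 2 f) with hg
  have s1 : (∫ ξ : ℝ, ‖distFT (⇑f) ξ‖ ^ 2) = ∫ η : ℝ, resolventSymbol η * ‖𝓕 g η‖ ^ 2 := by
    simp only [norm_distFT_sq]
    rw [integral_const_mul,
      Measure.integral_comp_div (fun η => resolventSymbol η * ‖𝓕 g η‖ ^ 2) (2 * π),
      abs_of_pos (by positivity), smul_eq_mul, inv_mul_cancel_left₀ (by positivity)]
  have s2 : ∫ x, (starRingEnd ℂ) (g x) * h x = ∫ x, (starRingEnd ℂ) (f x) * f x := by
    have a1 := integral_conj_mul_ladder 1 (ladder 1 2 f) h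
    have a2 := integral_conj_mul_ladder 2 f (ladder (-1) 1 h)
    simp only [Complex.ofReal_one, Complex.ofReal_ofNat] at a1 a2
    rw [hg, ← a1, ← a2, ← hf]
  rw [s1]
  apply Complex.ofReal_injective
  rw [← integral_complex_ofReal, ← integral_complex_ofReal]
  calc ∫ η : ℝ, ((resolventSymbol η * ‖𝓕 g η‖ ^ 2 : ℝ) : ℂ)
      = ∫ η : ℝ, ⟪𝓕 g η, 𝓕 h η⟫ := by
        congr 1; ext η
        rw [hF, RCLike.inner_apply, mul_assoc, Complex.mul_conj, Complex.normSq_eq_norm_sq]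
        push_cast; ring
    _ = ∫ x : ℝ, ⟪g x, h x⟫ := SchwartzMap.integral_inner_fourier_fourier g h
    _ = ∫ x, (starRingEnd ℂ) (f x) * f x := by
        rw [← s2]
        congr 1; ext x
        rw [RCLike.inner_apply, mul_comm]
    _ = ∫ x : ℝ, ((‖f x‖ ^ 2 : ℝ) : ℂ) := by
        congr 1; ext x
        rw [mul_comm, Complex.mul_conj, Complex.normSq_eq_norm_sq]
end

section
/- Define e(x, ξ) := (2π)^{−1/2} · [ (−ξ² − 3iξ tanh(x) + 3 tanh²(x) − 1) / (−ξ² + 3i|ξ| + 2) ] · e^{ixξ}, and for a Schwartz function f define 𝓕̃f(ξ) := ∫_ℝ conj(e(x, ξ)) f(x) dx. Then the distorted Fourier transform diagonalizes the Schrödinger operator H = −∂ₓ² − 6 sech²(x): for every Schwartz function f : ℝ → ℂ and every ξ ∈ ℝ one has ∫_ℝ conj(e(x, ξ)) ( −f″(x) − 6 sech²(x) f(x) ) dx = ξ² · ∫_ℝ conj(e(x, ξ)) f(x) dx, that is, 𝓕̃(Hf)(ξ) = ξ² 𝓕̃f(ξ). -/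
/-!
The identity is Green's formula for `H` against the eigenfunction. Up to a constant factor,
`conj (e(x, ξ))` is `u(x) = p(tanh x) e^{-ixξ}` with `p(t) = -ξ² + 3iξt + 3t² - 1`.
Since `tanh' = 1 - tanh² = sech²`, a direct computation gives `u'' = -(ξ² + 6 sech²) u`
(`hasDerivAt_uFun`, `hasDerivAt_duFun`), so the Wronskian `G = u' f - u f'` satisfies
`G' = u (-f'' - 6 sech² f) - ξ² u f`. As `u` and `u'` are bounded and `f` is Schwartz,
`G` and `G'` are integrable, whence `∫ G' = 0`.

Boundedness is handled uniformly: every function met here is a polynomial in `tanh x` times the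
unimodular factor `e^{-ixξ}` (`integrable_tanh_wave_mul`).
-/

open MeasureTheory Real Complex

/-- The conjugate plane wave `e^{-ixξ}` multiplied by a function `q` of `tanh x`. -/
noncomputable def tanhWave (q : ℂ → ℂ) (ξ x : ℝ) : ℂ :=
  q ((Real.tanh x : ℝ) : ℂ) * Complex.exp (-(Complex.I * (x : ℂ) * (ξ : ℂ)))

/-- The polynomial `p` with `conj (e(x, ξ)) = const · p(tanh x) e^{-ixξ}`. -/
noncomputable def uPoly (ξ : ℝ) (t : ℂ) : ℂ :=
  -(ξ : ℂ) ^ 2 + 3 * Complex.I * ξ * t + 3 * t ^ 2 - 1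

/-- The polynomial in `tanh x` describing the derivative of `tanhWave (uPoly ξ) ξ`. -/
noncomputable def duPoly (ξ : ℝ) (t : ℂ) : ℂ :=
  (3 * Complex.I * ξ + 6 * t) * (1 - t ^ 2) - Complex.I * ξ * uPoly ξ t

lemma hasDerivAt_ofReal_tanh (x : ℝ) :
    HasDerivAt (fun y : ℝ => ((Real.tanh y : ℝ) : ℂ))
      (1 - ((Real.tanh x : ℝ) : ℂ) ^ 2) x := by
  have hc : Real.cosh x ≠ 0 := (Real.cosh_pos x).ne'
  have h := ((Real.hasDerivAt_sinh x).div (Real.hasDerivAt_cosh x) hc).ofReal_comp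
  have hfun : (fun y : ℝ => ((Real.tanh y : ℝ) : ℂ)) =
      fun y : ℝ => (((Real.sinh / Real.cosh) y : ℝ) : ℂ) := by
    funext y
    rw [Real.tanh_eq_sinh_div_cosh]
    rfl
  rw [hfun]
  convert h using 1
  rw [Real.tanh_eq_sinh_div_cosh]
  norm_cast
  field_simp

lemma sech_sq (x : ℝ) :
    ((sech x : ℝ) : ℂ) ^ 2 = 1 - ((Real.tanh x : ℝ) : ℂ) ^ 2 := by
  have hc : Real.cosh x ≠ 0 := (Real.cosh_pos x).ne'
  rw [sech, Real.tanh_eq_sinh_div_cosh]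
  norm_cast
  field_simp
  linarith [Real.cosh_sq x]

lemma hasDerivAt_tanhWave {q : ℂ → ℂ} {q' : ℂ} (ξ x : ℝ)
    (hq : HasDerivAt q q' ((Real.tanh x : ℝ) : ℂ)) :
    HasDerivAt (tanhWave q ξ)
      ((q' * (1 - ((Real.tanh x : ℝ) : ℂ) ^ 2)
          - Complex.I * ξ * q ((Real.tanh x : ℝ) : ℂ))
        * Complex.exp (-(Complex.I * (x : ℂ) * (ξ : ℂ)))) x := by
  have h1 := hq.comp x (hasDerivAt_ofReal_tanh x)
  have h2 : HasDerivAt (fun y : ℝ => Complex.exp (-(Complex.I * (y : ℂ) * (ξ : ℂ))))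
      (Complex.exp (-(Complex.I * (x : ℂ) * (ξ : ℂ))) * -(Complex.I * 1 * ξ)) x :=
    ((((hasDerivAt_id x).ofReal_comp.const_mul Complex.I).mul_const (ξ : ℂ)).neg).cexp
  refine (h1.mul h2).congr_deriv ?_
  simp only [Function.comp]
  ring

lemma hasDerivAt_uPoly (ξ : ℝ) (t : ℂ) :
    HasDerivAt (uPoly ξ) (3 * Complex.I * ξ + 6 * t) t := by
  have h := ((((hasDerivAt_id t).const_mul (3 * Complex.I * ξ)).const_add (-(ξ : ℂ) ^ 2)).add
    (((hasDerivAt_id t).pow 2).const_mul 3)).sub_const 1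
  refine h.congr_deriv ?_
  simp
  ring

lemma hasDerivAt_duPoly (ξ : ℝ) (t : ℂ) :
    HasDerivAt (duPoly ξ)
      (6 * (1 - t ^ 2) + (3 * Complex.I * ξ + 6 * t) * (-(2 * t))
        - Complex.I * ξ * (3 * Complex.I * ξ + 6 * t)) t := by
  have h := ((((hasDerivAt_id t).const_mul 6).const_add (3 * Complex.I * ξ)).mul
    (((hasDerivAt_id t).pow 2).const_sub 1)).sub
      ((hasDerivAt_uPoly ξ t).const_mul (Complex.I * ξ))
  refine h.congr_deriv ?_
  simp

lemma hasDerivAt_uFun (ξ x : ℝ) :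
    HasDerivAt (tanhWave (uPoly ξ) ξ) (tanhWave (duPoly ξ) ξ x) x :=
  hasDerivAt_tanhWave ξ x (hasDerivAt_uPoly ξ _)

/-- The eigenvalue equation `u'' = -(ξ² + 6 sech²) u`. -/
lemma hasDerivAt_duFun (ξ x : ℝ) :
    HasDerivAt (tanhWave (duPoly ξ) ξ)
      (-((ξ : ℂ) ^ 2 + 6 * ((sech x : ℝ) : ℂ) ^ 2) * tanhWave (uPoly ξ) ξ x) x := by
  refine (hasDerivAt_tanhWave ξ x (hasDerivAt_duPoly ξ _)).congr_deriv ?_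
  rw [sech_sq, tanhWave, ← mul_assoc]
  congr 1
  simp only [duPoly, uPoly]
  have hI : Complex.I ^ 3 = -Complex.I := Complex.I_pow_three
  ring_nf
  simp only [Complex.I_sq, hI]
  ring

lemma integrable_tanh_wave_mul {q : ℂ → ℂ} (hq : Continuous q) (ξ : ℝ) {g : ℝ → ℂ}
    (hg : Integrable g) : Integrable (fun x => tanhWave q ξ x * g x) := by
  have htanh : Continuous (fun x : ℝ => ((Real.tanh x : ℝ) : ℂ)) :=
    continuous_iff_continuousAt.2 fun x => (hasDerivAt_ofReal_tanh x).continuousAt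
  have hcont : Continuous (tanhWave q ξ) := by
    unfold tanhWave
    exact (hq.comp htanh).mul (by fun_prop)
  obtain ⟨C, hC⟩ := (isCompact_closedBall (0 : ℂ) 1).exists_bound_of_continuousOn hq.continuousOn
  refine hg.bdd_mul hcont.aestronglyMeasurable (c := C) (Filter.Eventually.of_forall fun x => ?_)
  have hwave : ‖Complex.exp (-(Complex.I * (x : ℂ) * (ξ : ℂ)))‖ = 1 := by
    rw [Complex.norm_exp]
    simp
  rw [tanhWave, norm_mul, hwave, mul_one]
  apply hC
  rw [mem_closedBall_zero_iff, Complex.norm_real, Real.norm_eq_abs]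
  exact (Real.abs_tanh_lt_one x).le

/-- `conj (e(x, ξ))` is a constant multiple of `p(tanh x) e^{-ixξ}`. The identity to be
proved is linear in `e`, so the value of the constant plays no role. -/
lemma exists_conj_eFun (ξ : ℝ) :
    ∃ c : ℂ, ∀ x, (starRingEnd ℂ) (eFun x ξ) = c * tanhWave (uPoly ξ) ξ x := by
  refine ⟨(starRingEnd ℂ) (((Real.sqrt (2 * Real.pi) : ℝ) : ℂ)⁻¹ *
    (-(ξ : ℂ) ^ 2 + 3 * Complex.I * ((|ξ| : ℝ) : ℂ) + 2)⁻¹), fun x => ?_⟩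
  have hexp : (starRingEnd ℂ) (Complex.exp (Complex.I * (x : ℂ) * (ξ : ℂ))) =
      Complex.exp (-(Complex.I * (x : ℂ) * (ξ : ℂ))) := by
    rw [← Complex.exp_conj]
    simp
  have hpoly : (starRingEnd ℂ) (-(ξ : ℂ) ^ 2 - 3 * Complex.I * (ξ : ℂ) * ((Real.tanh x : ℝ) : ℂ)
        + 3 * ((Real.tanh x : ℝ) : ℂ) ^ 2 - 1) = uPoly ξ ((Real.tanh x : ℝ) : ℂ) := by
    simp only [map_sub, map_add, map_neg, map_mul, map_pow, map_one, map_ofNat,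
      Complex.conj_I, Complex.conj_ofReal, uPoly]
    ring
  rw [eFun, div_eq_mul_inv, map_mul, map_mul, map_mul, hexp, hpoly, tanhWave, map_mul]
  ring

theorem distorted_FT_diagonalizes_H (f : SchwartzMap ℝ ℂ) (ξ : ℝ) :
    (∫ x : ℝ, (starRingEnd ℂ) (eFun x ξ) *
        (-(deriv (deriv (⇑f)) x) - 6 * ((sech x : ℝ) : ℂ) ^ 2 * f x)) =
      (ξ : ℂ) ^ 2 * ∫ x : ℝ, (starRingEnd ℂ) (eFun x ξ) * f x := by
  obtain ⟨c, hc⟩ := exists_conj_eFun ξ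
  set u := tanhWave (uPoly ξ) ξ with hu
  have hdf : (⇑(SchwartzMap.derivCLM ℂ ℂ f) : ℝ → ℂ) = deriv f := by
    funext x
    simp
  have hddf : (⇑(SchwartzMap.derivCLM ℂ ℂ (SchwartzMap.derivCLM ℂ ℂ f)) : ℝ → ℂ)
      = deriv (deriv f) := by
    funext x
    rw [SchwartzMap.derivCLM_apply, hdf]
  have if0 : Integrable (fun x => f x) := f.integrable
  have if1 : Integrable (deriv f) := hdf ▸ (SchwartzMap.derivCLM ℂ ℂ f).integrable
  have if2 : Integrable (deriv (deriv f)) :=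
    hddf ▸ (SchwartzMap.derivCLM ℂ ℂ (SchwartzMap.derivCLM ℂ ℂ f)).integrable
  have hf1 : ∀ x, HasDerivAt f (deriv f x) x := fun x =>
    f.differentiableAt.hasDerivAt
  have hf2 : ∀ x, HasDerivAt (deriv f) (deriv (deriv f) x) x := fun x => by
    rw [← hdf]
    exact (SchwartzMap.derivCLM ℂ ℂ f).differentiableAt.hasDerivAt
  have hup : Continuous (uPoly ξ) := by unfold uPoly; fun_prop
  have hdup : Continuous (duPoly ξ) := by unfold duPoly; fun_prop
  have iuf : Integrable (fun x => u x * f x) := integrable_tanh_wave_mul hup ξ if0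
  have iHf : Integrable (fun x => u x *
      (-(deriv (deriv (⇑f)) x) - 6 * ((sech x : ℝ) : ℂ) ^ 2 * f x)) := by
    have h1 := integrable_tanh_wave_mul hup ξ if2
    have hq : Continuous (fun t : ℂ => 6 * (1 - t ^ 2) * uPoly ξ t) := by fun_prop
    have h2 := integrable_tanh_wave_mul hq ξ if0
    refine (h1.neg.sub h2).congr (Filter.Eventually.of_forall fun x => ?_)
    simp only [Pi.sub_apply, Pi.neg_apply, sech_sq, hu, tanhWave]
    ring
  -- the Wronskian `u' f - u f'` and its derivative
  have hG : ∀ x, HasDerivAt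
      (fun y => tanhWave (duPoly ξ) ξ y * f y - u y * deriv f y)
      (u x * (-(deriv (deriv (⇑f)) x) - 6 * ((sech x : ℝ) : ℂ) ^ 2 * f x)
        - (ξ : ℂ) ^ 2 * (u x * f x)) x := fun x => by
    refine (((hasDerivAt_duFun ξ x).mul (hf1 x)).sub
      ((hasDerivAt_uFun ξ x).mul (hf2 x))).congr_deriv ?_
    rw [← hu]
    ring
  have h0 := integral_eq_zero_of_hasDerivAt_of_integrable hG
    (iHf.sub (iuf.const_mul _))
    ((integrable_tanh_wave_mul hdup ξ if0).sub (integrable_tanh_wave_mul hup ξ if1))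
  rw [integral_sub iHf (iuf.const_mul _), integral_const_mul, sub_eq_zero] at h0
  simp only [hc, mul_assoc c, integral_const_mul]
  rw [h0]
  ring
end
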